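/- arXiv:2009.07348 — 4 statements merged into one kernel-verified Lean document; each statement's English description precedes it below -/
import Mathlib

section
/- For every natural number k ≥ 1 and every finite partially ordered set λ, we have τ_k(|λ|) ≤ q_k(λ) ≤ |λ|. -/
/-!
Both bounds follow by induction along the recursion defining `qk`. For the upper bound, any choice
of `u` leaves two subsets that omit `u`. For the lower bound one shows `|s| ≤ T_k(q_k(s))`: the set
`s` splits as `s_{⋡u}`, `{u}` and `s_{≻u}`, and Pascal's rule gives the matching identity
`T_{k+1}(t+1) = T_{k+1}(t) + 1 + T_k(t)` (`Tk_succ_succ`). The claim about `tauk` is then the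
minimality of an infimum in `ℕ`.
-/

open Classical in
/-- The query function `q_k(λ)`: `q_k(∅) = 0`, `q_1(λ) = |λ|`, and for `k > 1` and
`λ ≠ ∅`, `q_k(λ) = 1 + min_{u ∈ λ} max {q_k(λ_{⋡u}), q_{k-1}(λ_{≻u})}`. -/
noncomputable def qk {α : Type*} [PartialOrder α] (k : ℕ) (s : Finset α) : ℕ :=
  if h : s.Nonempty then
    if k ≤ 1 then s.card
    else 1 + s.attach.inf' (Finset.attach_nonempty_iff.mpr h) (fun u =>
      max (qk k (s.filter fun v => ¬ u.1 ≤ v))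
          (qk (k - 1) (s.filter fun v => u.1 < v)))
  else 0
  termination_by (k, s.card)
  decreasing_by
  · apply Prod.Lex.right
    apply Finset.card_lt_card
    rw [Finset.filter_ssubset]
    exact ⟨u.1, u.2, by simp⟩
  · apply Prod.Lex.left
    omega

/-- `T_k(x) = Σ_{i=1}^k C(x, i)`. -/
def Tk (k x : ℕ) : ℕ := ∑ i ∈ Finset.Icc 1 k, x.choose i

/-- `τ_k(x)` is the least nonnegative integer `t` such that `x ≤ T_k(t)`. -/
noncomputable def tauk (k x : ℕ) : ℕ := sInf {t : ℕ | x ≤ Tk k t}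

theorem Tk_mono (k : ℕ) : Monotone (Tk k) := fun _ _ h =>
  Finset.sum_le_sum fun i _ => Nat.choose_le_choose i h

theorem Tk_one (t : ℕ) : Tk 1 t = t := by simp [Tk]

theorem Tk_eq_range (k x : ℕ) : Tk k x = ∑ i ∈ Finset.range k, x.choose (i + 1) := by
  rw [Tk, Finset.range_eq_Ico, Finset.sum_Ico_add' (fun i => x.choose i) 0 k 1]
  rfl

theorem Tk_succ_succ (k t : ℕ) : Tk (k + 1) (t + 1) = Tk (k + 1) t + 1 + Tk k t := by
  have h : ∑ i ∈ Finset.range (k + 1), t.choose i = Tk k t + 1 := by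
    rw [Finset.sum_range_succ', Tk_eq_range, Nat.choose_zero_right]
  rw [Tk_eq_range, Tk_eq_range (k + 1) t]
  simp only [Nat.choose_succ_succ', Finset.sum_add_distrib]
  rw [h]
  ring

theorem qk_empty {α : Type*} [PartialOrder α] (k : ℕ) : qk k (∅ : Finset α) = 0 := by
  rw [qk]; simp

theorem qk_one {α : Type*} [PartialOrder α] (s : Finset α) : qk 1 s = s.card := by
  rcases s.eq_empty_or_nonempty with rfl | hs
  · simp [qk_empty]
  · rw [qk, dif_pos hs, if_pos le_rfl]

open Classical in
theorem qk_le_of_mem {α : Type*} [PartialOrder α] {k : ℕ} (hk : 1 ≤ k) {s : Finset α} {u : α}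
    (hu : u ∈ s) :
    qk (k + 1) s ≤ 1 + max (qk (k + 1) (s.filter fun v => ¬ u ≤ v))
      (qk k (s.filter fun v => u < v)) := by
  rw [qk, dif_pos ⟨u, hu⟩, if_neg (by omega)]
  exact Nat.add_le_add_left (Finset.inf'_le _ (Finset.mem_attach s ⟨u, hu⟩)) 1

open Classical in
theorem exists_qk_eq {α : Type*} [PartialOrder α] {k : ℕ} (hk : 1 ≤ k) {s : Finset α}
    (hs : s.Nonempty) :
    ∃ u ∈ s, qk (k + 1) s = 1 + max (qk (k + 1) (s.filter fun v => ¬ u ≤ v))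
      (qk k (s.filter fun v => u < v)) := by
  rw [qk, dif_pos hs, if_neg (by omega)]
  obtain ⟨u, -, hu⟩ := Finset.exists_mem_eq_inf' (Finset.attach_nonempty_iff.mpr hs)
    (fun u : {x // x ∈ s} => max (qk (k + 1) (s.filter fun v => ¬ u.1 ≤ v))
          (qk (k + 1 - 1) (s.filter fun v => u.1 < v)))
  exact ⟨u.1, u.2, congrArg (1 + ·) hu⟩

open Classical in
theorem card_split {α : Type*} [PartialOrder α] {s : Finset α} {u : α} (hu : u ∈ s) :
    s.card = (s.filter fun v => ¬ u ≤ v).card + 1 + (s.filter fun v => u < v).card := by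
  have h : s.filter (fun v => u ≤ v) = insert u (s.filter fun v => u < v) := by
    ext v
    simp only [Finset.mem_filter, Finset.mem_insert, le_iff_eq_or_lt]
    constructor
    · rintro ⟨hv, rfl | h⟩
      · exact Or.inl rfl
      · exact Or.inr ⟨hv, h⟩
    · rintro (rfl | ⟨hv, h⟩)
      · exact ⟨hu, Or.inl rfl⟩
      · exact ⟨hv, Or.inr h⟩
  have h1 := Finset.card_filter_add_card_filter_not (s := s) (fun v => u ≤ v)
  rw [h, Finset.card_insert_of_notMem (by simp)] at h1
  omega

theorem qk_le_card {α : Type*} [PartialOrder α] (k : ℕ) (hk : 1 ≤ k) (s : Finset α) :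
    qk k s ≤ s.card := by
  classical
  induction k, hk using Nat.le_induction generalizing s with
  | base => exact (qk_one s).le
  | succ k hk ih =>
    induction s using Finset.strongInduction with
    | H s ihs =>
      rcases s.eq_empty_or_nonempty with rfl | ⟨u, hu⟩
      · simp [qk_empty]
      · have h1 := ihs (s.filter fun v => ¬ u ≤ v)
          (Finset.filter_ssubset.mpr ⟨u, hu, by simp⟩)
        have h2 := ih (s.filter fun v => u < v)
        have h3 := card_split hu
        have h4 := qk_le_of_mem hk hu
        omega

theorem card_le_Tk_qk {α : Type*} [PartialOrder α] (k : ℕ) (hk : 1 ≤ k) (s : Finset α) :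
    s.card ≤ Tk k (qk k s) := by
  classical
  induction k, hk using Nat.le_induction generalizing s with
  | base => rw [Tk_one, qk_one]
  | succ k hk ih =>
    induction s using Finset.strongInduction with
    | H s ihs =>
      rcases s.eq_empty_or_nonempty with rfl | hs
      · simp
      · obtain ⟨u, hu, hq⟩ := exists_qk_eq hk hs
        have h1 := (ihs (s.filter fun v => ¬ u ≤ v)
          (Finset.filter_ssubset.mpr ⟨u, hu, by simp⟩)).trans
            (Tk_mono (k + 1) (le_max_left _ (qk k (s.filter fun v => u < v))))
        have h2 := (ih (s.filter fun v => u < v)).trans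
            (Tk_mono k (le_max_right (qk (k + 1) (s.filter fun v => ¬ u ≤ v)) _))
        rw [hq, add_comm 1, Tk_succ_succ, card_split hu]
        omega

theorem qk_bounds {α : Type*} [PartialOrder α] (k : ℕ) (hk : 1 ≤ k) (s : Finset α) :
    tauk k s.card ≤ qk k s ∧ qk k s ≤ s.card := by
  exact ⟨Nat.sInf_le (card_le_Tk_qk k hk s), qk_le_card k hk s⟩
end

section
/- Let x, y ∈ ℤ≥0 with y < τ_2(x). Then τ_2(x) ≤ τ_2(x − y) + 1. -/
/-!
Write `t = τ₂(x)` and `s = τ₂(x - y)`, and suppose `t ≥ s + 2`. Minimality of `t` gives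
`x > T₂(t - 1) = T₂(t - 2) + (t - 1)`, and `y ≤ t - 1`, so `x - y > T₂(t - 2) ≥ T₂(s)`,
which contradicts `x - y ≤ T₂(s)`.
-/

/-- The `x`-th triangular number `T_2(x) = x(x+1)/2`. -/
def T2 (x : ℕ) : ℕ := x * (x + 1) / 2

/-- `τ_2(x)` is the least nonnegative integer `t` such that `x ≤ T_2(t)`. -/
noncomputable def tau2 (x : ℕ) : ℕ := sInf {t : ℕ | x ≤ T2 t}

lemma T2_succ (n : ℕ) : T2 (n + 1) = T2 n + (n + 1) := by
  unfold T2
  rw [show (n + 1) * (n + 1 + 1) = n * (n + 1) + (n + 1) * 2 by ring,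
    Nat.add_mul_div_right _ _ two_pos]

lemma T2_mono : Monotone T2 :=
  monotone_nat_of_le_succ fun n => by rw [T2_succ]; omega

lemma self_le_T2 (n : ℕ) : n ≤ T2 n := by
  cases n with
  | zero => exact Nat.zero_le _
  | succ n => rw [T2_succ]; omega

/-- The infimum defining `tau2` is attained, since `x ≤ T2 x` makes the set nonempty. -/
lemma le_T2_tau2 (x : ℕ) : x ≤ T2 (tau2 x) :=
  Nat.sInf_mem (s := {t : ℕ | x ≤ T2 t}) ⟨x, self_le_T2 x⟩

lemma T2_lt_of_lt_tau2 {x t : ℕ} (h : t < tau2 x) : T2 t < x :=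
  not_le.mp (Nat.notMem_of_lt_sInf (s := {t : ℕ | x ≤ T2 t}) h)

theorem tau2_sub_le (x y : ℕ) (h : y < tau2 x) : tau2 x ≤ tau2 (x - y) + 1 := by
  by_contra! hlt
  obtain ⟨k, hk⟩ : ∃ k, tau2 x = k + 2 := ⟨tau2 x - 2, by omega⟩
  have hx : T2 (k + 1) < x := T2_lt_of_lt_tau2 (by omega)
  have hs : x - y ≤ T2 (tau2 (x - y)) := le_T2_tau2 _
  have hm : T2 (tau2 (x - y)) ≤ T2 k := T2_mono (by omega)
  rw [T2_succ] at hx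
  omega
end

section
/- Let y, r, n ≥ 1 be natural numbers with y ≥ r and y ≡ r (mod n). If n is even and (y − r)/n is odd, then T_2(y) ≡ T_2(r) + n/2 (mod n); otherwise T_2(y) ≡ T_2(r) (mod n). -/
lemma two_mul_T2 (x : ℕ) : 2 * T2 x = x * (x + 1) :=
  Nat.mul_div_cancel' (Nat.even_mul_succ_self x).two_dvd

/-- To compute `T2 (r + n * k)` modulo `n`, it suffices to write `T2 (n * k)` as `c + n * q`;
the hypothesis is this equation doubled, which avoids the truncating division by `2`. -/
lemma T2_add_mul_modEq {r n k c q : ℕ} (h : n * k * (n * k + 1) = 2 * (c + n * q)) :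
    T2 (r + n * k) ≡ T2 r + c [MOD n] := by
  have e : T2 (r + n * k) = T2 r + c + n * (k * r + q) := by
    have h1 := two_mul_T2 (r + n * k)
    have h2 := two_mul_T2 r
    nlinarith
  simp [e, Nat.ModEq]

theorem T2_modEq (y r n : ℕ) (hy : 1 ≤ y) (hr : 1 ≤ r) (hn : 1 ≤ n)
    (hry : r ≤ y) (hmod : y ≡ r [MOD n]) :
    (Even n ∧ Odd ((y - r) / n) → T2 y ≡ T2 r + n / 2 [MOD n]) ∧
    (¬(Even n ∧ Odd ((y - r) / n)) → T2 y ≡ T2 r [MOD n]) := by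
  obtain ⟨k, hk⟩ := (Nat.modEq_iff_dvd' hry).1 hmod.symm
  obtain rfl : y = r + n * k := by omega
  rw [hk, Nat.mul_div_cancel_left k hn]
  constructor
  · rintro ⟨⟨m, rfl⟩, ⟨j, rfl⟩⟩
    refine T2_add_mul_modEq (q := j + m * (2 * j + 1) ^ 2) ?_
    rw [show (m + m) / 2 = m by omega]
    ring
  · intro h
    rcases Nat.even_or_odd k with ⟨j, rfl⟩ | hkodd
    · refine T2_add_mul_modEq (c := 0) (q := j * (n * (j + j) + 1)) ?_
      ring
    · have hnodd : Odd n := Nat.not_even_iff_odd.1 fun hne => h ⟨hne, hkodd⟩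
      obtain ⟨j, hj⟩ := (hnodd.mul hkodd).add_one
      refine T2_add_mul_modEq (c := 0) (q := k * j) ?_
      rw [hj]
      ring
end

section
/- Let λ be a nonempty finite poset, let v = (v_1, …, v_s) be a nonempty sequence of elements of λ, and let w = (w_1, …, w_r) be a nonempty sequence of elements of λ_{⋡v} = {x ∈ λ : ¬(x ⪰ v_i) for all i}. Then, for the concatenated sequence u = vw, one has Q_2(λ, u) = max{Q_2(λ, v), Q_2(λ_{⋡v}, w) + s}, where λ_{⋡v} carries the induced order. -/
/-!
The layers of the concatenation `v ++ w` are the layers of `v` in `s` followed by the layers of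
`w` in `notAbove s v` (`layer_append_left`, `layer_append_right`): for an index in the `w` part,
the condition of not lying above any earlier term splits into not lying above any term of `v`,
which is membership in `notAbove s v`, and not lying above any earlier term of `w`. The maximum
defining `Q2 s (v ++ w)` therefore splits into two maxima, the second with every index shifted by
`v.length`. Pulling this shift out of the second maximum uses that `w` is nonempty.
-/

open Classical in
/-- `λ_u^{(t)} = {v ∈ λ : v ⪰ u_t and ¬(v ⪰ u_i) for all i < t}` (`t` zero-based). -/
noncomputable def layer {α : Type*} [PartialOrder α] (s : Finset α) (u : List α)
    (t : Fin u.length) : Finset α :=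
  s.filter fun v => u.get t ≤ v ∧ ∀ i : Fin u.length, i < t → ¬ u.get i ≤ v

/-- `u` is a `λ`-strategy: a sequence of elements of `λ` such that every element of `λ`
lies above some term of `u`, and all the sets `λ_u^{(t)}` are nonempty. -/
def IsStrategy {α : Type*} [PartialOrder α] (s : Finset α) (u : List α) : Prop :=
  (∀ x ∈ u, x ∈ s) ∧ (∀ v ∈ s, ∃ x ∈ u, x ≤ v) ∧
    ∀ t : Fin u.length, (layer s u t).Nonempty

/-- `Q_2(λ, u) = max {|λ_u^{(t)}| + t - 1 : t = 1, …, r}` (here `t` is zero-based, so the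
summand is `t.val` rather than `t - 1`). -/
noncomputable def Q2 {α : Type*} [PartialOrder α] (s : Finset α) (u : List α) : ℕ :=
  Finset.univ.sup fun t : Fin u.length => (layer s u t).card + t.val

open Classical in
/-- `λ_{⋡v}`: the set of elements of `λ` not lying above any term of `v`. -/
noncomputable def notAbove {α : Type*} [PartialOrder α] (s : Finset α) (v : List α) :
    Finset α :=
  s.filter fun x => ∀ a ∈ v, ¬ a ≤ x

theorem layer_append_left {α : Type*} [PartialOrder α] (s : Finset α) (v w : List α)
    (t : ℕ) (ht : t < v.length) (ht' : t < (v ++ w).length) :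
    layer s (v ++ w) ⟨t, ht'⟩ = layer s v ⟨t, ht⟩ := by
  ext x
  simp only [layer, Finset.mem_filter, List.get_eq_getElem, List.getElem_append_left ht]
  refine and_congr_right fun _ => and_congr_right fun _ => ⟨fun h i hi => ?_, fun h i hi => ?_⟩
  · have := h ⟨i, by simp; omega⟩ hi
    simpa [List.getElem_append_left i.2] using this
  · have hi' : i.val < t := hi
    rw [List.getElem_append_left (by omega)]
    exact h ⟨i, by omega⟩ hi

theorem layer_append_right {α : Type*} [PartialOrder α] (s : Finset α) (v w : List α)
    (t : ℕ) (ht : t < w.length) (ht' : v.length + t < (v ++ w).length) :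
    layer s (v ++ w) ⟨v.length + t, ht'⟩ = layer (notAbove s v) w ⟨t, ht⟩ := by
  ext x
  simp only [layer, notAbove, Finset.mem_filter, List.get_eq_getElem]
  rw [List.getElem_append_right (by omega)]
  simp only [Nat.add_sub_cancel_left]
  constructor
  · rintro ⟨hx, hle, h⟩
    refine ⟨⟨hx, fun a ha => ?_⟩, hle, fun i hi => ?_⟩
    · obtain ⟨k, hk, rfl⟩ := List.getElem_of_mem ha
      have := h ⟨k, by simp; omega⟩ (by simp [Fin.lt_def]; omega)
      simpa [List.getElem_append_left hk] using this
    · have hi' : i.val < t := hi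
      have := h ⟨v.length + i, by simp⟩ (by simpa [Fin.lt_def] using hi')
      simpa using this
  · rintro ⟨⟨hx, hv⟩, hle, h⟩
    refine ⟨hx, hle, fun i hi => ?_⟩
    have hi' : i.val < v.length + t := hi
    by_cases hiv : i.val < v.length
    · rw [List.getElem_append_left hiv]
      exact hv _ (List.getElem_mem hiv)
    · rw [List.getElem_append_right (by omega)]
      exact h ⟨i - v.length, by omega⟩ (by simp only [Fin.lt_def]; omega)

theorem layer_card_add_le_Q2 {α : Type*} [PartialOrder α] (s : Finset α) (u : List α)
    (t : Fin u.length) : (layer s u t).card + t.val ≤ Q2 s u :=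
  Finset.le_sup (f := fun t : Fin u.length => (layer s u t).card + t.val) (Finset.mem_univ t)

theorem Q2_append {α : Type*} [PartialOrder α] (s : Finset α) (hs : s.Nonempty)
    (v w : List α) (hv : v ≠ []) (hw : w ≠ [])
    (hvs : ∀ x ∈ v, x ∈ s) (hws : ∀ x ∈ w, x ∈ notAbove s v) :
    Q2 s (v ++ w) = max (Q2 s v) (Q2 (notAbove s v) w + v.length) := by
  apply le_antisymm
  · refine Finset.sup_le fun t _ => ?_
    obtain ⟨t, ht⟩ := t
    by_cases htv : t < v.length
    · rw [layer_append_left s v w t htv ht]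
      exact le_max_of_le_left (layer_card_add_le_Q2 s v ⟨t, htv⟩)
    · obtain ⟨j, rfl⟩ := Nat.exists_eq_add_of_le (not_lt.mp htv)
      have hj : j < w.length := by simpa using ht
      rw [layer_append_right s v w j hj ht]
      have := layer_card_add_le_Q2 (notAbove s v) w ⟨j, hj⟩
      refine le_max_of_le_right ?_
      simp only at this ⊢
      omega
  · refine max_le (Finset.sup_le fun t _ => ?_) ?_
    · have ht' : t.val < (v ++ w).length := by simp; omega
      have := layer_card_add_le_Q2 s (v ++ w) ⟨t, ht'⟩
      rwa [layer_append_left s v w t t.2 ht'] at this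
    · have hne : (Finset.univ : Finset (Fin w.length)).Nonempty :=
        ⟨⟨0, List.length_pos_iff.mpr hw⟩, Finset.mem_univ _⟩
      -- The supremum is attained because `w` is nonempty; the empty supremum is the junk value 0.
      obtain ⟨j, -, hj⟩ := Finset.exists_mem_eq_sup _ hne
        fun t : Fin w.length => (layer (notAbove s v) w t).card + t.val
      have ht' : v.length + j.val < (v ++ w).length := by simp
      have := layer_card_add_le_Q2 s (v ++ w) ⟨v.length + j, ht'⟩
      rw [layer_append_right s v w j j.2 ht'] at this
      rw [Q2, hj]
      simp only [Fin.eta] at this ⊢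
      omega
end
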